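/- arXiv:1412.6461 — 3 statements merged into one kernel-verified Lean document; each statement's English description precedes it below -/
import Mathlib

section
/- Let u : ℝ³ → ℝ be a smooth solution of the universal hierarchy equation u_yy = u_z·u_xy − u_y·u_xz (coordinates (x,y,z), subscripts denoting partial derivatives). Then the function φ := u_z + u_x + y·u_y + u satisfies the linearized equation φ_yy = u_z·φ_xy + u_xy·φ_z − u_y·φ_xz − u_xz·φ_y at every point of ℝ³ (i.e., φ is a symmetry of the universal hierarchy equation). -/
/-- Partial derivative of a function on `ℝ³` in the direction `v`. -/
noncomputable def pd (v : ℝ × ℝ × ℝ) (f : ℝ × ℝ × ℝ → ℝ) : ℝ × ℝ × ℝ → ℝ :=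
  fun p => fderiv ℝ f p v

/-- Coordinates are `(x, y, z)`. -/
noncomputable def dx : (ℝ × ℝ × ℝ → ℝ) → ℝ × ℝ × ℝ → ℝ := pd (1, 0, 0)
noncomputable def dy : (ℝ × ℝ × ℝ → ℝ) → ℝ × ℝ × ℝ → ℝ := pd (0, 1, 0)
noncomputable def dz : (ℝ × ℝ × ℝ → ℝ) → ℝ × ℝ × ℝ → ℝ := pd (0, 0, 1)

/-- The symmetry `φ = u_z + u_x + y·u_y + u` of the universal hierarchy equation. -/
noncomputable def phi (u : ℝ × ℝ × ℝ → ℝ) : ℝ × ℝ × ℝ → ℝ :=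
  fun p => dz u p + dx u p + p.2.1 * dy u p + u p

theorem sm_add {f g : ℝ × ℝ × ℝ → ℝ} (hf : ContDiff ℝ (⊤ : ℕ∞) f)
    (hg : ContDiff ℝ (⊤ : ℕ∞) g) : ContDiff ℝ (⊤ : ℕ∞) (f + g) := hf.add hg

theorem sm_mul {f g : ℝ × ℝ × ℝ → ℝ} (hf : ContDiff ℝ (⊤ : ℕ∞) f)
    (hg : ContDiff ℝ (⊤ : ℕ∞) g) : ContDiff ℝ (⊤ : ℕ∞) (f * g) := hf.mul hg

theorem pd_smooth (v : ℝ × ℝ × ℝ) {f : ℝ × ℝ × ℝ → ℝ} (hf : ContDiff ℝ (⊤ : ℕ∞) f) :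
    ContDiff ℝ (⊤ : ℕ∞) (pd v f) :=
  (hf.fderiv_right (m := (⊤ : ℕ∞)) (by simp)).clm_apply contDiff_const

theorem smooth_da {f : ℝ × ℝ × ℝ → ℝ} (hf : ContDiff ℝ (⊤ : ℕ∞) f) (p : ℝ × ℝ × ℝ) :
    DifferentiableAt ℝ f p := (hf.differentiable (by simp)).differentiableAt

theorem pd_add (v : ℝ × ℝ × ℝ) {f g : ℝ × ℝ × ℝ → ℝ} (hf : ContDiff ℝ (⊤ : ℕ∞) f)
    (hg : ContDiff ℝ (⊤ : ℕ∞) g) : pd v (f + g) = pd v f + pd v g := by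
  funext p
  simp only [pd, Pi.add_apply]
  rw [fderiv_add (smooth_da hf p) (smooth_da hg p)]
  rfl

theorem pd_sub (v : ℝ × ℝ × ℝ) {f g : ℝ × ℝ × ℝ → ℝ} (hf : ContDiff ℝ (⊤ : ℕ∞) f)
    (hg : ContDiff ℝ (⊤ : ℕ∞) g) : pd v (f - g) = pd v f - pd v g := by
  funext p
  simp only [pd, Pi.sub_apply]
  rw [fderiv_sub (smooth_da hf p) (smooth_da hg p)]
  rfl

theorem pd_mul (v : ℝ × ℝ × ℝ) {f g : ℝ × ℝ × ℝ → ℝ} (hf : ContDiff ℝ (⊤ : ℕ∞) f)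
    (hg : ContDiff ℝ (⊤ : ℕ∞) g) : pd v (f * g) = f * pd v g + g * pd v f := by
  funext p
  simp only [pd, Pi.add_apply, Pi.mul_apply]
  rw [fderiv_mul (smooth_da hf p) (smooth_da hg p)]
  rfl

theorem pd_comm (v w : ℝ × ℝ × ℝ) {f : ℝ × ℝ × ℝ → ℝ} (hf : ContDiff ℝ (⊤ : ℕ∞) f) :
    pd v (pd w f) = pd w (pd v f) := by
  have hd : ContDiff ℝ (⊤ : ℕ∞) (fderiv ℝ f) := hf.fderiv_right (by simp)
  have key : ∀ (a b p : ℝ × ℝ × ℝ), pd a (pd b f) p = fderiv ℝ (fderiv ℝ f) p a b := by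
    intro a b p
    have h1 : DifferentiableAt ℝ (fderiv ℝ f) p :=
      (hd.differentiable (by simp)).differentiableAt
    change fderiv ℝ (fun q => fderiv ℝ f q b) p a = _
    rw [fderiv_clm_apply h1 (differentiableAt_const b)]
    simp
  funext p
  rw [key, key]
  have hs : IsSymmSndFDerivAt ℝ f p := hf.contDiffAt.isSymmSndFDerivAt (by
    simp only [minSmoothness_of_isRCLikeNormedField]
    exact WithTop.coe_le_coe.2 (le_top : (2 : ℕ∞) ≤ ⊤))
  exact hs v w

/-- The coordinate function `y`. -/
def ycoord : ℝ × ℝ × ℝ → ℝ := fun p => p.2.1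

theorem ycoord_smooth : ContDiff ℝ (⊤ : ℕ∞) ycoord := contDiff_fst.comp contDiff_snd

theorem pd_ycoord (v : ℝ × ℝ × ℝ) : pd v ycoord = fun _ => v.2.1 := by
  funext p
  have h : HasFDerivAt ycoord
      ((ContinuousLinearMap.fst ℝ ℝ ℝ).comp (ContinuousLinearMap.snd ℝ ℝ (ℝ × ℝ))) p :=
    ((ContinuousLinearMap.fst ℝ ℝ ℝ).comp
      (ContinuousLinearMap.snd ℝ ℝ (ℝ × ℝ))).hasFDerivAt
  simp only [pd]
  rw [h.fderiv]
  rfl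

theorem pd_const (v : ℝ × ℝ × ℝ) (c : ℝ) : pd v (fun _ => c) = fun _ => 0 := by
  funext p
  simp [pd]

/-- First and second derivatives of `phi u`. -/
theorem pd_phi (v : ℝ × ℝ × ℝ) {u : ℝ × ℝ × ℝ → ℝ} (hu : ContDiff ℝ (⊤ : ℕ∞) u) :
    pd v (phi u) = pd v (dz u) + pd v (dx u)
      + (ycoord * pd v (dy u) + dy u * (fun _ => v.2.1)) + pd v u := by
  have hx : ContDiff ℝ (⊤ : ℕ∞) (dx u) := pd_smooth _ hu
  have hy : ContDiff ℝ (⊤ : ℕ∞) (dy u) := pd_smooth _ hu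
  have hz : ContDiff ℝ (⊤ : ℕ∞) (dz u) := pd_smooth _ hu
  have h : phi u = dz u + dx u + ycoord * dy u + u := rfl
  rw [h, pd_add v (sm_add (sm_add hz hx) (sm_mul ycoord_smooth hy)) hu,
    pd_add v (sm_add hz hx) (sm_mul ycoord_smooth hy), pd_add v hz hx,
    pd_mul v ycoord_smooth hy, pd_ycoord]

theorem pd_pd_phi (w v : ℝ × ℝ × ℝ) {u : ℝ × ℝ × ℝ → ℝ} (hu : ContDiff ℝ (⊤ : ℕ∞) u)
    (p : ℝ × ℝ × ℝ) :
    pd w (pd v (phi u)) p = pd w (pd v (dz u)) p + pd w (pd v (dx u)) p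
      + (p.2.1 * pd w (pd v (dy u)) p + pd v (dy u) p * w.2.1 + pd w (dy u) p * v.2.1)
      + pd w (pd v u) p := by
  have hx : ContDiff ℝ (⊤ : ℕ∞) (dx u) := pd_smooth _ hu
  have hy : ContDiff ℝ (⊤ : ℕ∞) (dy u) := pd_smooth _ hu
  have hz : ContDiff ℝ (⊤ : ℕ∞) (dz u) := pd_smooth _ hu
  have hx' := pd_smooth v hx
  have hy' := pd_smooth v hy
  have hz' := pd_smooth v hz
  have hu' := pd_smooth v hu
  have hc : ContDiff ℝ (⊤ : ℕ∞) (fun _ : ℝ × ℝ × ℝ => v.2.1) := contDiff_const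
  have hA := sm_mul ycoord_smooth hy'
  have hB := sm_mul hy hc
  rw [pd_phi v hu, pd_add w (sm_add (sm_add hz' hx') (sm_add hA hB)) hu',
    pd_add w (sm_add hz' hx') (sm_add hA hB), pd_add w hz' hx', pd_add w hA hB,
    pd_mul w ycoord_smooth hy', pd_mul w hy hc, pd_ycoord, pd_const]
  simp only [Pi.add_apply, Pi.mul_apply, ycoord]
  ring

/-- The equation differentiated in the direction `v`. -/
theorem pd_sol (v : ℝ × ℝ × ℝ) {u : ℝ × ℝ × ℝ → ℝ} (hu : ContDiff ℝ (⊤ : ℕ∞) u)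
    (hsol : ∀ p : ℝ × ℝ × ℝ,
      dy (dy u) p = dz u p * dy (dx u) p - dy u p * dz (dx u) p) (p : ℝ × ℝ × ℝ) :
    dy (dy (pd v u)) p = dz u p * dy (dx (pd v u)) p + dy (dx u) p * dz (pd v u) p
      - (dy u p * dz (dx (pd v u)) p + dz (dx u) p * dy (pd v u) p) := by
  have hx : ContDiff ℝ (⊤ : ℕ∞) (dx u) := pd_smooth _ hu
  have hy : ContDiff ℝ (⊤ : ℕ∞) (dy u) := pd_smooth _ hu
  have hz : ContDiff ℝ (⊤ : ℕ∞) (dz u) := pd_smooth _ hu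
  have hxy : ContDiff ℝ (⊤ : ℕ∞) (dy (dx u)) := pd_smooth _ hx
  have hxz : ContDiff ℝ (⊤ : ℕ∞) (dz (dx u)) := pd_smooth _ hx
  have h : dy (dy u) = dz u * dy (dx u) - dy u * dz (dx u) := funext hsol
  have h2 := congrFun (congrArg (pd v) h) p
  rw [pd_sub v (sm_mul hz hxy) (sm_mul hy hxz), pd_mul v hz hxy, pd_mul v hy hxz] at h2
  have e1 : pd v (dy (dy u)) = dy (dy (pd v u)) :=
    (pd_comm v _ hy).trans (congrArg dy (pd_comm v _ hu))
  have e2 : pd v (dy (dx u)) = dy (dx (pd v u)) :=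
    (pd_comm v _ hx).trans (congrArg dy (pd_comm v _ hu))
  have e3 : pd v (dz (dx u)) = dz (dx (pd v u)) :=
    (pd_comm v _ hx).trans (congrArg dz (pd_comm v _ hu))
  have e4 : pd v (dz u) = dz (pd v u) := pd_comm v _ hu
  have e5 : pd v (dy u) = dy (pd v u) := pd_comm v _ hu
  rw [← e1, ← e2, ← e3, ← e4, ← e5]
  simpa only [Pi.add_apply, Pi.mul_apply, Pi.sub_apply] using h2

/-- If `u` is a smooth solution of the universal hierarchy equation
`u_yy = u_z·u_xy − u_y·u_xz`, then `φ = u_z + u_x + y·u_y + u` satisfies the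
linearized equation `φ_yy = u_z·φ_xy + u_xy·φ_z − u_y·φ_xz − u_xz·φ_y`. -/
theorem universal_hierarchy_symmetry (u : ℝ × ℝ × ℝ → ℝ)
    (hu : ContDiff ℝ (⊤ : ℕ∞) u)
    (hsol : ∀ p : ℝ × ℝ × ℝ,
      dy (dy u) p = dz u p * dy (dx u) p - dy u p * dz (dx u) p) :
    ∀ p : ℝ × ℝ × ℝ,
      dy (dy (phi u)) p =
        dz u p * dy (dx (phi u)) p + dy (dx u) p * dz (phi u) p
          - dy u p * dz (dx (phi u)) p - dz (dx u) p * dy (phi u) p := by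
  intro p
  have sx := pd_sol (1, 0, 0) hu hsol p
  have sy := pd_sol (0, 1, 0) hu hsol p
  have sz := pd_sol (0, 0, 1) hu hsol p
  have s := hsol p
  have a1 := pd_pd_phi (0, 1, 0) (0, 1, 0) hu p
  have a2 := pd_pd_phi (0, 1, 0) (1, 0, 0) hu p
  have a3 := pd_pd_phi (0, 0, 1) (1, 0, 0) hu p
  have b1 := congrFun (pd_phi (0, 0, 1) hu) p
  have b2 := congrFun (pd_phi (0, 1, 0) hu) p
  have c1 : dx (dy u) = dy (dx u) := pd_comm _ _ hu
  have c2 : dz (dy u) = dy (dz u) := pd_comm _ _ hu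
  have c3 : dx (dz u) = dz (dx u) := pd_comm _ _ hu
  simp only [Pi.add_apply, Pi.mul_apply, ycoord] at a1 a2 a3 b1 b2
  simp only [← dx.eq_def, ← dy.eq_def, ← dz.eq_def] at *
  rw [a1, a2, a3, b1, b2]
  simp only [c1, c2, c3] at *
  linear_combination sz + sx + p.2.1 * sy + 3 * s
end

section
/- Define the rational functions X(u,p,q,w) := −w³/(w² − (p+u)w − q) and Y(u,p,q,w) := −q·w²/(w² − (p+u)w − q). Then for all real numbers x, y, u, p, q, r, s, w with w² − (p+u)w − q ≠ 0, setting t := q·r − (p+u)·s + p·q, the identity (∂X/∂u)·q + (∂X/∂p)·s + (∂X/∂q)·t + (∂X/∂w)·Y = (∂Y/∂u)·p + (∂Y/∂p)·r + (∂Y/∂q)·s + (∂Y/∂w)·X holds, all partial derivatives being taken at the point (u,p,q,w). (Here p,q,r,s,t stand for u_x,u_y,u_xx,u_xy,u_yy, t being eliminated via Equation (E1); the identity is exactly the cross-derivative compatibility condition asserting that the system w_x = X, w_y = Y is a differential covering of Equation (E1).) -/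
/-- `X(u,p,q,w) = −w³/(w² − (p+u)w − q)` from the covering (7) of Equation (E1). -/
noncomputable def covX (u p q w : ℝ) : ℝ := -w ^ 3 / (w ^ 2 - (p + u) * w - q)

/-- `Y(u,p,q,w) = −q·w²/(w² − (p+u)w − q)` from the covering (7) of Equation (E1). -/
noncomputable def covY (u p q w : ℝ) : ℝ := -(q * w ^ 2) / (w ^ 2 - (p + u) * w - q)

/-- Cross-derivative compatibility `D_y(X) = D_x(Y)` of the covering
`w_x = X`, `w_y = Y` over Equation (E1)
`u_yy = u_y·u_xx − (u_x + u)·u_xy + u_x·u_y`, where `p,q,r,s,t` stand for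
`u_x,u_y,u_xx,u_xy,u_yy` and `t = q·r − (p+u)·s + p·q` is eliminated via (E1). -/
theorem covering_E1_compatibility (x y u p q r s w : ℝ)
    (hD : w ^ 2 - (p + u) * w - q ≠ 0) :
    deriv (fun u' => covX u' p q w) u * q
      + deriv (fun p' => covX u p' q w) p * s
      + deriv (fun q' => covX u p q' w) q * (q * r - (p + u) * s + p * q)
      + deriv (fun w' => covX u p q w') w * covY u p q w
    = deriv (fun u' => covY u' p q w) u * p
      + deriv (fun p' => covY u p' q w) p * r
      + deriv (fun q' => covY u p q' w) q * s
      + deriv (fun w' => covY u p q w') w * covX u p q w := by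
  have key : ∀ (f g : ℝ → ℝ) (f' g' a : ℝ), HasDerivAt f f' a → HasDerivAt g g' a → g a ≠ 0 →
      deriv (fun z => f z / g z) a = (f' * g a - f a * g') / g a ^ 2 :=
    fun f g f' g' a hf hg h0 => (hf.div hg h0).deriv
  have dU : HasDerivAt (fun z : ℝ => w ^ 2 - (p + z) * w - q) (-w) u := by
    have h := ((((hasDerivAt_id u).const_add p).mul_const w).const_sub (w ^ 2)).sub_const q
    simpa using h
  have dP : HasDerivAt (fun z : ℝ => w ^ 2 - (z + u) * w - q) (-w) p := by
    have h := ((((hasDerivAt_id p).add_const u).mul_const w).const_sub (w ^ 2)).sub_const q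
    simpa using h
  have dQ : HasDerivAt (fun z : ℝ => w ^ 2 - (p + u) * w - z) (-1) q := by
    have h := (hasDerivAt_id q).const_sub (w ^ 2 - (p + u) * w)
    simpa using h
  have dW : HasDerivAt (fun z : ℝ => z ^ 2 - (p + u) * z - q) (2 * w - (p + u)) w := by
    have h := ((hasDerivAt_pow 2 w).sub ((hasDerivAt_id w).const_mul (p + u))).sub_const q
    simpa using h
  have nW : HasDerivAt (fun z : ℝ => -z ^ 3) (-(3 * w ^ 2)) w := by
    have h := (hasDerivAt_pow 3 w).fun_neg
    simpa using h
  have mW : HasDerivAt (fun z : ℝ => -(q * z ^ 2)) (-(q * (2 * w))) w := by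
    have h := ((hasDerivAt_pow 2 w).const_mul q).fun_neg
    simpa using h
  have mQ : HasDerivAt (fun z : ℝ => -(z * w ^ 2)) (-(w ^ 2)) q := by
    have h := ((hasDerivAt_id q).mul_const (w ^ 2)).fun_neg
    simpa using h
  unfold covX covY
  rw [key _ _ _ _ _ (hasDerivAt_const u (-w ^ 3)) dU hD,
    key _ _ _ _ _ (hasDerivAt_const p (-w ^ 3)) dP hD,
    key _ _ _ _ _ (hasDerivAt_const q (-w ^ 3)) dQ hD,
    key _ _ _ _ _ nW dW hD,
    key _ _ _ _ _ (hasDerivAt_const u (-(q * w ^ 2))) dU hD,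
    key _ _ _ _ _ (hasDerivAt_const p (-(q * w ^ 2))) dP hD,
    key _ _ _ _ _ mQ dQ hD,
    key _ _ _ _ _ mW dW hD]
  field_simp
  ring
end

section
/- Let g₁ be the 4-dimensional real Lie algebra with basis e₁, e₂, e₃, e₄ and Lie brackets determined by [e₁,e₂] = e₁, [e₂,e₄] = e₄, [e₃,e₄] = −e₄, all other brackets of basis vectors being zero (up to antisymmetry). Let g₂ be the 4-dimensional real Lie algebra with basis f₁, f₂, f₃, f₄ and Lie brackets determined by [f₁,f₄] = −f₁, [f₂,f₃] = −f₁, [f₂,f₄] = −(2/3)·f₂, [f₃,f₄] = −(1/3)·f₃, all other brackets of basis vectors being zero (up to antisymmetry). Then there is no Lie algebra isomorphism between g₁ and g₂ (indeed the derived subalgebra [g₁,g₁] has dimension 2 while [g₂,g₂] has dimension 3). -/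
/-- The bracket of the 4-dimensional Lie algebra `g₁` in the basis
`e₁, e₂, e₃, e₄` (coordinates `x 0, x 1, x 2, x 3`), determined by bilinearity
and `[e₁,e₂] = e₁`, `[e₂,e₄] = e₄`, `[e₃,e₄] = −e₄`, all other brackets of
basis vectors being zero. -/
def bracket₁ (x y : Fin 4 → ℝ) : Fin 4 → ℝ :=
  ![x 0 * y 1 - x 1 * y 0, 0, 0,
    (x 1 * y 3 - x 3 * y 1) - (x 2 * y 3 - x 3 * y 2)]

/-- The bracket of the 4-dimensional Lie algebra `g₂` in the basis
`f₁, f₂, f₃, f₄` (coordinates `x 0, x 1, x 2, x 3`), determined by bilinearity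
and `[f₁,f₄] = −f₁`, `[f₂,f₃] = −f₁`, `[f₂,f₄] = −(2/3)·f₂`,
`[f₃,f₄] = −(1/3)·f₃`, all other brackets of basis vectors being zero. -/
noncomputable def bracket₂ (x y : Fin 4 → ℝ) : Fin 4 → ℝ :=
  ![-(x 0 * y 3 - x 3 * y 0) - (x 1 * y 2 - x 2 * y 1),
    -(2 / 3) * (x 1 * y 3 - x 3 * y 1),
    -(1 / 3) * (x 2 * y 3 - x 3 * y 2), 0]

theorem finrank_derived₁ : Module.finrank ℝ
    (Submodule.span ℝ {z : Fin 4 → ℝ | ∃ x y, z = bracket₁ x y}) = 2 := by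
  have hs : Submodule.span ℝ {z : Fin 4 → ℝ | ∃ x y, z = bracket₁ x y}
      = Submodule.span ℝ (Set.range ![(![1,0,0,0] : Fin 4 → ℝ), ![0,0,0,1]]) := by
    apply le_antisymm
    · rw [Submodule.span_le]
      rintro z ⟨x, y, rfl⟩
      rw [SetLike.mem_coe, Submodule.mem_span_range_iff_exists_fun]
      refine ⟨![bracket₁ x y 0, bracket₁ x y 3], ?_⟩
      ext i
      fin_cases i <;> simp [bracket₁, Fin.sum_univ_succ]
    · rw [Submodule.span_le]
      rintro z ⟨i, rfl⟩
      apply Submodule.subset_span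
      fin_cases i
      · refine ⟨![1,0,0,0], ![0,1,0,0], ?_⟩
        ext i
        fin_cases i <;> simp [bracket₁]
      · refine ⟨![0,1,0,0], ![0,0,0,1], ?_⟩
        ext i
        fin_cases i <;> simp [bracket₁]
  rw [hs, finrank_span_eq_card, Fintype.card_fin]
  rw [Fintype.linearIndependent_iff]
  intro g hg i
  have h0 := congrFun hg 0
  have h3 := congrFun hg 3
  simp [Fin.sum_univ_succ] at h0 h3
  fin_cases i <;> simp [h0, h3]

theorem finrank_derived₂ : Module.finrank ℝ
    (Submodule.span ℝ {z : Fin 4 → ℝ | ∃ x y, z = bracket₂ x y}) = 3 := by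
  have hs : Submodule.span ℝ {z : Fin 4 → ℝ | ∃ x y, z = bracket₂ x y}
      = Submodule.span ℝ
        (Set.range ![(![1,0,0,0] : Fin 4 → ℝ), ![0,1,0,0], ![0,0,1,0]]) := by
    apply le_antisymm
    · rw [Submodule.span_le]
      rintro z ⟨x, y, rfl⟩
      rw [SetLike.mem_coe, Submodule.mem_span_range_iff_exists_fun]
      refine ⟨![bracket₂ x y 0, bracket₂ x y 1, bracket₂ x y 2], ?_⟩
      ext i
      fin_cases i <;> simp [bracket₂, Fin.sum_univ_succ]
    · rw [Submodule.span_le]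
      rintro z ⟨i, rfl⟩
      apply Submodule.subset_span
      fin_cases i
      · refine ⟨![1,0,0,0], ![0,0,0,-1], ?_⟩
        ext i
        fin_cases i <;> simp [bracket₂]
      · refine ⟨![0,1,0,0], ![0,0,0,-(3/2)], ?_⟩
        ext i
        fin_cases i <;> simp [bracket₂]
      · refine ⟨![0,0,1,0], ![0,0,0,-3], ?_⟩
        ext i
        fin_cases i <;> simp [bracket₂]
  rw [hs, finrank_span_eq_card, Fintype.card_fin]
  rw [Fintype.linearIndependent_iff]
  intro g hg i
  have h0 := congrFun hg 0
  have h1 := congrFun hg 1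
  have h2 := congrFun hg 2
  simp [Fin.sum_univ_succ] at h0 h1 h2
  fin_cases i <;> simp [h0, h1, h2]

/-- There is no Lie algebra isomorphism between `g₁` and `g₂`, i.e. no linear
equivalence of the underlying vector space `ℝ⁴` intertwining the two brackets;
indeed, the derived subalgebra of `g₁` has dimension `2` while that of `g₂`
has dimension `3`. -/
theorem g1_not_isomorphic_g2 :
    (¬ ∃ e : (Fin 4 → ℝ) ≃ₗ[ℝ] (Fin 4 → ℝ),
        ∀ x y : Fin 4 → ℝ, e (bracket₁ x y) = bracket₂ (e x) (e y))
      ∧ Module.finrank ℝ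
          (Submodule.span ℝ {z : Fin 4 → ℝ | ∃ x y, z = bracket₁ x y}) = 2
      ∧ Module.finrank ℝ
          (Submodule.span ℝ {z : Fin 4 → ℝ | ∃ x y, z = bracket₂ x y}) = 3 := by
  refine ⟨?_, finrank_derived₁, finrank_derived₂⟩
  rintro ⟨e, he⟩
  have hm : (Submodule.span ℝ {z : Fin 4 → ℝ | ∃ x y, z = bracket₁ x y}).map
      (e : (Fin 4 → ℝ) →ₗ[ℝ] (Fin 4 → ℝ))
      = Submodule.span ℝ {z : Fin 4 → ℝ | ∃ x y, z = bracket₂ x y} := by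
    rw [Submodule.map_span]
    congr 1
    ext z
    constructor
    · rintro ⟨w, ⟨x, y, rfl⟩, rfl⟩
      exact ⟨e x, e y, he x y⟩
    · rintro ⟨x, y, rfl⟩
      refine ⟨bracket₁ (e.symm x) (e.symm y), ⟨_, _, rfl⟩, ?_⟩
      simpa using he (e.symm x) (e.symm y)
  have h := LinearEquiv.finrank_map_eq e
    (Submodule.span ℝ {z : Fin 4 → ℝ | ∃ x y, z = bracket₁ x y})
  rw [hm, finrank_derived₁, finrank_derived₂] at h
  omega
end
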